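/- arXiv:math/0010267 — 5 statements merged into one kernel-verified Lean document; each statement's English description precedes it below -/
import Mathlib

section
/- Let F be a field, n a positive integer, G a subgroup of GL(n,F), and H a normal subgroup of G. Suppose there is a subset X of the space of n×n matrices over F such that H is exactly the centralizer of X in G, i.e. H = {g ∈ G : gx = xg for every x ∈ X, where g is regarded as an n×n matrix}. Then there exists a group homomorphism from G into GL(n²,F) whose kernel is exactly H. -/
/-!
Let `G` act on the matrices by conjugation. Since `H` is normal, the matrices fixed by `H` form a
`G`-stable subspace `C`, and `H` acts trivially on it. Conversely `X ⊆ C`, so an element of `G`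
acting trivially on `C` centralizes `X` and lies in `H`. Hence `H` is the kernel of the
representation of `G` on `C`, whose dimension is at most `n ^ 2`; adding a trivial summand raises
the dimension to exactly `n ^ 2`. The same argument works for any algebra that is free of finite
rank over a principal ideal domain, since there `C` is again free, of no larger rank.
-/

open Module
open scoped MatrixGroups

section Representation

variable {R G V : Type*} [CommRing R] [Group G] [AddCommGroup V] [Module R V]

theorem ker_toInvariants_eq_of_mem_iff_forall_apply_eq (ρ : Representation R G V)
    (H : Subgroup G) [H.Normal] {X : Set V} (hH : ∀ g, g ∈ H ↔ ∀ x ∈ X, ρ g x = x) :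
    (ρ.toInvariants H).ker = H := by
  ext g
  rw [MonoidHom.mem_ker]
  constructor
  · intro hg
    refine (hH g).2 fun x hx => ?_
    have hx_inv : x ∈ Representation.invariants (ρ.comp H.subtype) := fun h => (hH h).1 h.2 x hx
    exact congrArg Subtype.val (LinearMap.congr_fun hg ⟨x, hx_inv⟩)
  · intro hg
    ext v
    exact v.2 ⟨g, hg⟩

theorem ker_prod_trivial (ρ : Representation R G V) (W : Type*) [AddCommGroup W] [Module R W] :
    (ρ.prod (Representation.trivial R G W)).ker = ρ.ker := by
  ext g
  simp only [MonoidHom.mem_ker, LinearMap.ext_iff, Prod.forall, Prod.ext_iff]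
  simp

theorem exists_hom_generalLinearGroup_ker_eq [Nontrivial R] [Module.Free R V] [Module.Finite R V]
    (ρ : Representation R G V) {m : ℕ} (hm : finrank R V ≤ m) :
    ∃ φ : G →* GL (Fin m) R, φ.ker = ρ.ker := by
  let W := Fin (m - finrank R V) → R
  have finrank_prod_eq : finrank R (V × W) = m := by
    rw [finrank_prod, finrank_fin_fun, Nat.add_sub_cancel' hm]
  let b : Basis (Fin m) R (V × W) := finBasisOfFinrankEq R (V × W) finrank_prod_eq
  let toGL := (Matrix.GeneralLinearGroup.toLin' b).symm
  refine ⟨toGL.toMonoidHom.comp (ρ.prod (Representation.trivial R G W)).asGroupHom, ?_⟩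
  calc (toGL.toMonoidHom.comp (ρ.prod (Representation.trivial R G W)).asGroupHom).ker
      = (ρ.prod (Representation.trivial R G W)).asGroupHom.ker :=
        MonoidHom.ker_comp_of_injective _ _ toGL.injective
    _ = (ρ.prod (Representation.trivial R G W)).ker := MonoidHom.ker_toHomUnits _
    _ = ρ.ker := ker_prod_trivial ρ W

theorem exists_hom_generalLinearGroup_ker_eq_of_mem_iff_forall_apply_eq
    [IsDomain R] [IsPrincipalIdealRing R] [Module.Free R V] [Module.Finite R V]
    (ρ : Representation R G V) (H : Subgroup G) [H.Normal] {X : Set V}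
    (hH : ∀ g, g ∈ H ↔ ∀ x ∈ X, ρ g x = x) {m : ℕ} (hm : finrank R V ≤ m) :
    ∃ φ : G →* GL (Fin m) R, φ.ker = H := by
  rw [← ker_toInvariants_eq_of_mem_iff_forall_apply_eq ρ H hH]
  exact exists_hom_generalLinearGroup_ker_eq _ ((Submodule.finrank_le _).trans hm)

end Representation

section Algebra

variable (R A : Type*) [CommRing R] [Ring A] [Algebra R A]

/-- The conjugation representation of the unit group of an `R`-algebra `A`, in which `u` sends `x`
to `u * x * u⁻¹`. It turns centralizers in groups of units into pointwise stabilizers. -/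
def unitsConjRepresentation : Representation R Aˣ A :=
  (Representation.ofDistribMulAction R (ConjAct Aˣ) A).comp ConjAct.toConjAct.toMonoidHom

variable {A}

theorem unitsConjRepresentation_apply_eq_self_iff (u : Aˣ) (x : A) :
    unitsConjRepresentation R A u x = x ↔ Commute (u : A) x :=
  u.mul_inv_eq_iff_eq_mul

theorem stmt_0_general [IsDomain R] [IsPrincipalIdealRing R] [Module.Free R A] [Module.Finite R A]
    {G : Type*} [Group G] (f : G →* Aˣ) (H : Subgroup G) [H.Normal] {X : Set A}
    (hH : ∀ g, g ∈ H ↔ ∀ x ∈ X, Commute (f g : A) x) {m : ℕ} (hm : finrank R A ≤ m) :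
    ∃ φ : G →* GL (Fin m) R, φ.ker = H := by
  refine exists_hom_generalLinearGroup_ker_eq_of_mem_iff_forall_apply_eq
    ((unitsConjRepresentation R A).comp f) H (X := X) (fun g => ?_) hm
  simpa only [MonoidHom.comp_apply, unitsConjRepresentation_apply_eq_self_iff] using hH g

end Algebra

/-- **Wehrfritz, Theorem 6.2.** Let `G` be a subgroup of `GL(n, F)` and `H` a normal
subgroup of `G` such that `H = C_G(X)` for some subset `X` of the `n × n` matrices over `F`.
Then there exists a homomorphism of `G` into `GL(n², F)` with kernel `H`. -/
theorem stmt_0 (F : Type*) [Field F] (n : ℕ) (hn : 0 < n)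
    (G : Subgroup (Matrix.GeneralLinearGroup (Fin n) F))
    (H : Subgroup G) (hHnormal : H.Normal)
    (X : Set (Matrix (Fin n) (Fin n) F))
    (hH : ∀ g : G, g ∈ H ↔ ∀ x ∈ X,
      ((g : Matrix.GeneralLinearGroup (Fin n) F) : Matrix (Fin n) (Fin n) F) * x =
        x * ((g : Matrix.GeneralLinearGroup (Fin n) F) : Matrix (Fin n) (Fin n) F)) :
    ∃ φ : G →* Matrix.GeneralLinearGroup (Fin (n ^ 2)) F, φ.ker = H :=
  stmt_0_general F G.subtype H hH (by simp [finrank_matrix, sq])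
end

section
/- Let F be a field and n a positive integer. If G is a group admitting an injective group homomorphism into GL(n,F), then the quotient group G/C(G) of G by its center admits an injective group homomorphism into GL(n²,F). In particular, if a group G is linear, then so is G/C(G). -/
/-!
Let `G` be embedded in the multiplicative monoid of a finite free `R`-algebra `A`, and let `B` be
the subalgebra generated by `G`. Conjugation makes `B` a representation of `G`, and `g` acts
trivially on `B` if and only if it commutes with the generators of `B`, that is, if and only if `g`
is central in `G`. Conjugation on all of `A` would not do, since a central element of `G` need not
be central in `A`. Over a principal ideal domain `B` is free of rank at most `rank A`, and adding
a trivial summand to it makes up the difference; in the theorem `A` is the matrix algebra, of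
rank `n²`.
-/

open Module

section Conjugation

variable {R A G : Type*} [CommSemiring R] [Semiring A] [Algebra R A] [Group G]

variable (R) in
/-- The representation of `G` on the algebra `A` by `g • x = f g * x * f g⁻¹`, for a multiplicative
map `f` from `G` to `A`. -/
def conjRepresentation (f : G →* A) : Representation R G A :=
  (DistribMulAction.toModuleEnd R A).comp (ConjAct.toConjAct.toMonoidHom.comp f.toHomUnits)

theorem conjRepresentation_apply (f : G →* A) (g : G) (x : A) :
    conjRepresentation R f g x = f g * x * f g⁻¹ :=
  rfl

theorem conjRepresentation_apply_eq_self_iff (f : G →* A) (g : G) (x : A) :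
    conjRepresentation R f g x = x ↔ Commute (f g) x := by
  rw [conjRepresentation_apply]
  exact Units.mul_inv_eq_iff_eq_mul (f.toHomUnits g)

theorem commute_of_adjoin_eq_top {s : Set A} (hs : Algebra.adjoin R s = ⊤) {a : A}
    (ha : ∀ b ∈ s, Commute a b) (x : A) : Commute a x := by
  have hle : Algebra.adjoin R s ≤ Subalgebra.centralizer R {a} :=
    Algebra.adjoin_le fun b hb ↦
      (Subalgebra.mem_centralizer_iff R).2 (by rintro _ rfl; exact ha b hb)
  have hx : x ∈ Algebra.adjoin R s := hs ▸ Algebra.mem_top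
  exact (Subalgebra.mem_centralizer_iff R).1 (hle hx) a rfl

theorem ker_conjRepresentation_eq_center {f : G →* A} (hf : Function.Injective f)
    (hadjoin : Algebra.adjoin R (Set.range f) = ⊤) :
    (conjRepresentation R f).ker = Subgroup.center G := by
  ext g
  calc
    g ∈ (conjRepresentation R f).ker ↔ ∀ x, Commute (f g) x := by
      simp only [MonoidHom.mem_ker, LinearMap.ext_iff, Module.End.one_apply,
        conjRepresentation_apply_eq_self_iff]
    _ ↔ ∀ h, Commute (f g) (f h) :=
      ⟨fun hg h ↦ hg (f h), fun hg ↦ commute_of_adjoin_eq_top hadjoin (Set.forall_mem_range.2 hg)⟩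
    _ ↔ ∀ h, Commute g h := forall_congr' fun _ ↦ commute_map_iff hf
    _ ↔ g ∈ Subgroup.center G := by
      simp only [Subgroup.mem_center_iff, commute_iff_eq, eq_comm]

end Conjugation

section AdjoinRange

variable {R A M : Type*} [CommSemiring R] [Semiring A] [Algebra R A] [Monoid M]

variable (R) in
/-- A multiplicative map to an algebra, with codomain restricted to the subalgebra generated by
its image. -/
def toAdjoinRange (f : M →* A) : M →* Algebra.adjoin R (Set.range f) :=
  f.codRestrict _ fun x ↦ Algebra.subset_adjoin ⟨x, rfl⟩

theorem toAdjoinRange_injective {f : M →* A} (hf : Function.Injective f) :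
    Function.Injective (toAdjoinRange R f) :=
  (f.injective_codRestrict _ _).2 hf

theorem adjoin_range_toAdjoinRange (f : M →* A) :
    Algebra.adjoin R (Set.range (toAdjoinRange R f)) = ⊤ := by
  rw [← Algebra.adjoin_adjoin_coe_preimage]
  congr 1
  ext x
  simp [toAdjoinRange, Subtype.ext_iff]

end AdjoinRange

theorem exists_injective_end_monoidHom_matrix {R M : Type*} [CommRing R] [Nontrivial R]
    [AddCommGroup M] [Module R M] [Module.Free R M] [Module.Finite R M] {m : ℕ}
    (hm : finrank R M ≤ m) :
    ∃ φ : Module.End R M →* Matrix (Fin m) (Fin m) R, Function.Injective φ := by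
  let N := Fin (m - finrank R M) → R
  have hrank : finrank R (M × N) = m := by
    rw [finrank_prod, finrank_fin_fun, Nat.add_sub_cancel' hm]
  let extend : Module.End R M →* Module.End R (M × N) :=
    (LinearMap.prodMapRingHom R M N).toMonoidHom.comp (MonoidHom.inl _ _)
  have extend_injective : Function.Injective extend := fun u v huv ↦
    LinearMap.ext fun x ↦ congrArg Prod.fst (LinearMap.congr_fun huv (x, 0))
  let toMatrix := LinearMap.toMatrixAlgEquiv (finBasisOfFinrankEq R (M × N) hrank)
  exact ⟨(toMatrix : _ →* _).comp extend, toMatrix.injective.comp extend_injective⟩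

theorem stmt_1_general {R A G : Type*} [CommRing R] [IsDomain R] [IsPrincipalIdealRing R]
    [Ring A] [Algebra R A] [Module.Free R A] [Module.Finite R A] [Group G]
    (f : G →* A) (hf : Function.Injective f) {m : ℕ} (hm : finrank R A ≤ m) :
    ∃ ψ : G ⧸ Subgroup.center G →* GL (Fin m) R, Function.Injective ψ := by
  let B := Algebra.adjoin R (Set.range f)
  have : Module.Free R B := inferInstanceAs (Module.Free R B.toSubmodule)
  have : Module.Finite R B := inferInstanceAs (Module.Finite R B.toSubmodule)
  obtain ⟨φ, hφ⟩ :=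
    exists_injective_end_monoidHom_matrix ((Submodule.finrank_le B.toSubmodule).trans hm)
  let ρ : Representation R G B := conjRepresentation R (toAdjoinRange R f)
  let Φ : G →* GL (Fin m) R := (Units.map φ).comp ρ.toHomUnits
  have hker : Subgroup.center G = Φ.ker := by
    rw [MonoidHom.ker_comp_of_injective _ _ (Units.map_injective hφ), MonoidHom.ker_toHomUnits,
      ker_conjRepresentation_eq_center (toAdjoinRange_injective hf)
        (adjoin_range_toAdjoinRange f)]
  exact ⟨QuotientGroup.lift _ Φ hker.le, (QuotientGroup.injective_lift_iff _ _ _).2 hker⟩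

/-- If a group `G` embeds into `GL(n, F)`, then `G / C(G)` embeds into `GL(n², F)`.
In particular, if `G` is linear, then so is `G / C(G)`. -/
theorem stmt_1 (F : Type*) [Field F] (n : ℕ) (hn : 0 < n)
    (G : Type*) [Group G]
    (f : G →* Matrix.GeneralLinearGroup (Fin n) F) (hf : Function.Injective f) :
    ∃ ψ : G ⧸ Subgroup.center G →* Matrix.GeneralLinearGroup (Fin (n ^ 2)) F,
      Function.Injective ψ := by
  have hrank : finrank F (Matrix (Fin n) (Fin n) F) = n ^ 2 := by simp [finrank_matrix, sq]
  exact stmt_1_general ((Units.coeHom _).comp f) (Units.val_injective.comp hf) hrank.le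
end

section
/- Let G be a group and H a subgroup of G of finite index. Then G is linear if and only if H is linear. -/
/-- A group is linear if it has a faithful representation into `GL(m, F)`
for some field `F` and some positive integer `m`. -/
def IsLinearGroup (G : Type*) [Group G] : Prop :=
  ∃ (F : Type) (_ : Field F) (m : ℕ), 0 < m ∧
    ∃ φ : G →* Matrix.GeneralLinearGroup (Fin m) F, Function.Injective φ

/-!
Restricting a faithful representation of `G` to `H` gives one direction. For the other, coinduce a
faithful representation `A ≠ 0` of `H`: the elements are the functions `f : G → A` with
`f (h * x) = h • f x`, on which `G` acts by right translation. Such an `f` is determined by its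
values on a right transversal of `H`, which is finite, so the coinduced representation is
finite-dimensional. For each `v : A` it contains the function equal to `h • v` at `h ∈ H` and to `0`
off `H`; if `g` fixes all of these, comparing values at `1` shows that `g` lies in `H` and acts
trivially on `A`, so `g = 1`.
-/

open Function Representation
open scoped Pointwise

section Coinduced

variable {k G H A : Type*}

lemma coind_apply_coe_apply [Semiring k] [Monoid G] [Monoid H] [AddCommMonoid A] [Module k A]
    (φ : H →* G) (ρ : Representation k H A) (g : G) (f : coindV φ ρ) (x : G) :
    (coind φ ρ g f).1 x = f.1 (x * g) :=
  rfl

lemma coindV_ext_of_eqOn [Semiring k] [Monoid G] [Monoid H] [AddCommMonoid A] [Module k A]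
    {φ : H →* G} {ρ : Representation k H A} {S : Set G} (hS : Set.range φ * S = Set.univ)
    {f f' : coindV φ ρ} (hff' : Set.EqOn f.1 f'.1 S) : f = f' := by
  ext x
  obtain ⟨_, ⟨h, rfl⟩, s, hs, rfl⟩ : x ∈ Set.range φ * S := hS ▸ Set.mem_univ x
  change f.1 (φ h * s) = f'.1 (φ h * s)
  rw [f.2, f'.2, hff' hs]

lemma isNoetherian_coindV [Ring k] [Group G] [Group H] [AddCommGroup A] [Module k A]
    [IsNoetherian k A] (φ : H →* G) [φ.range.FiniteIndex] (ρ : Representation k H A) :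
    IsNoetherian k (coindV φ ρ) := by
  obtain ⟨T, hT, -⟩ := φ.range.exists_isComplement_right 1
  have : Finite T := hT.finite_right
  have hT_mul : Set.range φ * T = Set.univ := φ.coe_range ▸ hT.mul_eq
  let restrict : coindV φ ρ →ₗ[k] (T → A) :=
    LinearMap.funLeft k A Subtype.val ∘ₗ (coindV φ ρ).subtype
  refine isNoetherian_of_injective restrict fun f f' hff' ↦ ?_
  exact coindV_ext_of_eqOn hT_mul fun t ht ↦ congrFun hff' ⟨t, ht⟩

section ExtendByZero

variable [Semiring k] [Group G] [Group H] [AddCommMonoid A] [Module k A] {φ : H →* G}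

/-- The element of the representation coinduced by `ρ` along an injective `φ : H →* G` that is
determined by `v : A`: it takes the value `ρ h v` at `φ h` and vanishes off the range of `φ`. -/
noncomputable def coindExtendByZero (hφ : Injective φ) (ρ : Representation k H A) (v : A) :
    coindV φ ρ where
  val := extend φ (fun h ↦ ρ h v) 0
  property h x := by
    by_cases hx : x ∈ φ.range
    · obtain ⟨h', rfl⟩ := hx
      rw [← map_mul, hφ.extend_apply, hφ.extend_apply, map_mul, Module.End.mul_apply]
    · have hhx : φ h * x ∉ φ.range := (φ.range.mul_mem_cancel_left ⟨h, rfl⟩).not.2 hx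
      rw [extend_apply' _ _ _ hx, extend_apply' _ _ _ hhx, Pi.zero_apply, Pi.zero_apply, map_zero]

section Values

variable (hφ : Injective φ) (ρ : Representation k H A) (v : A)

lemma coindExtendByZero_apply_map (h : H) : (coindExtendByZero hφ ρ v).1 (φ h) = ρ h v :=
  hφ.extend_apply (fun h ↦ ρ h v) 0 h

lemma coindExtendByZero_apply_one : (coindExtendByZero hφ ρ v).1 1 = v := by
  simpa only [map_one, Module.End.one_apply] using coindExtendByZero_apply_map hφ ρ v 1

lemma coindExtendByZero_apply_of_notMem_range {x : G} (hx : x ∉ φ.range) :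
    (coindExtendByZero hφ ρ v).1 x = 0 :=
  extend_apply' (fun h ↦ ρ h v) (0 : G → A) x hx

lemma coindExtendByZero_injective : Injective (coindExtendByZero hφ ρ) :=
  LeftInverse.injective (g := fun f : coindV φ ρ ↦ f.1 1) (coindExtendByZero_apply_one hφ ρ)

end Values

variable [Nontrivial A] {ρ : Representation k H A}

lemma ker_coind_le_map_ker (hφ : Injective φ) : (coind φ ρ).ker ≤ ρ.ker.map φ := by
  intro g hg
  have apply_g (v : A) : (coindExtendByZero hφ ρ v).1 g = v := calc
    (coindExtendByZero hφ ρ v).1 g = (coind φ ρ g (coindExtendByZero hφ ρ v)).1 1 := by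
      rw [coind_apply_coe_apply, one_mul]
    _ = (coindExtendByZero hφ ρ v).1 1 := by
      rw [MonoidHom.mem_ker.1 hg, Module.End.one_apply]
    _ = v := coindExtendByZero_apply_one hφ ρ v
  have hg_range : g ∈ φ.range := by
    by_contra hg_notMem
    obtain ⟨v, hv⟩ := exists_ne (0 : A)
    exact hv <| (apply_g v).symm.trans <|
      coindExtendByZero_apply_of_notMem_range hφ ρ v hg_notMem
  obtain ⟨h, rfl⟩ := hg_range
  refine ⟨h, MonoidHom.mem_ker.2 <| LinearMap.ext fun v ↦ ?_, rfl⟩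
  exact (coindExtendByZero_apply_map hφ ρ v h).symm.trans (apply_g v)

lemma coind_injective (hφ : Injective φ) (hρ : Injective ρ) : Injective (coind φ ρ) := by
  rw [← MonoidHom.ker_eq_bot_iff, eq_bot_iff]
  calc (coind φ ρ).ker ≤ ρ.ker.map φ := ker_coind_le_map_ker hφ
    _ = ⊥ := by rw [(MonoidHom.ker_eq_bot_iff ρ).2 hρ, Subgroup.map_bot]

end ExtendByZero

end Coinduced

namespace IsLinearGroup

variable {G H : Type*} [Group G] [Group H]

lemma of_injective {φ : H →* G} (hφ : Injective φ) : IsLinearGroup G → IsLinearGroup H :=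
  fun ⟨F, hF, m, hm, ψ, hψ⟩ ↦ ⟨F, hF, m, hm, ψ.comp φ, hψ.comp hφ⟩

lemma of_injective_representation {F : Type} [Field F] {W : Type*} [AddCommGroup W] [Module F W]
    [Module.Finite F W] [Nontrivial W] {ρ : Representation F G W} (hρ : Injective ρ) :
    IsLinearGroup G := by
  let toMatrix := LinearMap.toMatrixAlgEquiv (Module.finBasis F W)
  let φ : G →* Matrix.GeneralLinearGroup (Fin (Module.finrank F W)) F :=
    (Units.mapEquiv toMatrix.toMulEquiv).toMonoidHom.comp ρ.toHomUnits
  have toHomUnits_injective : Injective ρ.toHomUnits := Injective.of_comp (f := Units.val) hρ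
  have hφ : Injective φ :=
    (Units.mapEquiv toMatrix.toMulEquiv).injective.comp toHomUnits_injective
  exact ⟨F, inferInstance, Module.finrank F W, Module.finrank_pos, φ, hφ⟩

lemma exists_injective_representation (hG : IsLinearGroup G) :
    ∃ (F : Type) (_ : Field F) (m : ℕ) (ρ : Representation F G (Fin m → F)),
      0 < m ∧ Injective ρ := by
  obtain ⟨F, _, m, hm, φ, hφ⟩ := hG
  let toEnd : Matrix (Fin m) (Fin m) F ≃ₐ[F] Module.End F (Fin m → F) := Matrix.toLinAlgEquiv'
  exact ⟨F, _, m, toEnd.toMulEquiv.toMonoidHom.comp ((Units.coeHom _).comp φ), hm,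
    toEnd.injective.comp (Units.val_injective.comp hφ)⟩

lemma of_finiteIndex_range {φ : H →* G} (hφ : Injective φ) [φ.range.FiniteIndex]
    (hH : IsLinearGroup H) : IsLinearGroup G := by
  obtain ⟨F, _, m, ρ, hm, hρ⟩ := hH.exists_injective_representation
  have : Nonempty (Fin m) := ⟨⟨0, hm⟩⟩
  have : IsNoetherian F (coindV φ ρ) := isNoetherian_coindV φ ρ
  have : Nontrivial (coindV φ ρ) := (coindExtendByZero_injective hφ ρ).nontrivial
  exact of_injective_representation (coind_injective hφ hρ)

end IsLinearGroup

/-- If `H` is a finite index subgroup of `G`, then `G` is linear if and only if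
`H` is linear. -/
theorem stmt_3 (G : Type*) [Group G] (H : Subgroup G) (hindex : H.index ≠ 0) :
    IsLinearGroup G ↔ IsLinearGroup H := by
  have : H.subtype.range.FiniteIndex := by
    rw [H.range_subtype]
    exact ⟨hindex⟩
  exact ⟨.of_injective H.subtype_injective, .of_finiteIndex_range H.subtype_injective⟩
end

section
/- For every n ≥ 2, the braid group B_n on n strings is linear; that is, there exist a field F and a positive integer m together with an injective group homomorphism B_n → GL(m,F). -/
/-- The braid relations on `n` strings, as elements of the free group on the
generators `σ_1, …, σ_{n-1}` (indexed by `Fin (n - 1)`): `σ_i σ_j = σ_j σ_i`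
whenever `|i - j| ≥ 2`, and `σ_i σ_{i+1} σ_i = σ_{i+1} σ_i σ_{i+1}`. -/
def braidRels (n : ℕ) : Set (FreeGroup (Fin (n - 1))) :=
  {r | (∃ i j : Fin (n - 1), (i : ℕ) + 2 ≤ (j : ℕ) ∧
          r = FreeGroup.of i * FreeGroup.of j * (FreeGroup.of i)⁻¹ * (FreeGroup.of j)⁻¹) ∨
       (∃ i j : Fin (n - 1), (j : ℕ) = (i : ℕ) + 1 ∧
          r = FreeGroup.of i * FreeGroup.of j * FreeGroup.of i *
              (FreeGroup.of j * FreeGroup.of i * FreeGroup.of j)⁻¹)}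

/-- The braid group `B_n` on `n` strings, presented by generators
`σ_1, …, σ_{n-1}` and the braid relations. -/
def BraidGroup (n : ℕ) : Type :=
  PresentedGroup (braidRels n)

instance (n : ℕ) : Group (BraidGroup n) := by
  unfold BraidGroup; infer_instance

/-!
Krammer's representation with parameters `t` and `q` has polynomial entries, so positive braids
still act when `t` is specialised to `0`; if moreover `0 < q < 1`, they preserve the cone of
nonnegative matrices. In that specialisation `σ_i` kills a nonzero matrix unit `e_i` of the cone,
and conversely a positive braid killing `e_i` is right divisible by `σ_i`. For `t` transcendental,
two positive braids with the same action have the same specialisation at `t = 0`, hence the same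
right divisors among the generators; cancelling generators one at a time shows that they are equal.
The full twist is central and divisible by every generator, so every braid is a fraction of positive
braids and the representation is faithful on the whole group.
-/

/-- The braid relations for a finite family `s` of elements of a monoid: far-apart members commute,
and neighbours satisfy `s i * s (i + 1) * s i = s (i + 1) * s i * s (i + 1)`. -/
structure IsBraidFamily {M : Type*} [Monoid M] {K : ℕ} (s : Fin K → M) : Prop where
  commute : ∀ i j : Fin K, (i : ℕ) + 2 ≤ j → Commute (s i) (s j)
  braid : ∀ i j : Fin K, (j : ℕ) = i + 1 → s i * s j * s i = s j * s i * s j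

namespace IsBraidFamily

variable {M : Type*} [Monoid M] {K : ℕ}

lemma restrict_init {s : Fin (K + 1) → M} (hs : IsBraidFamily s) : IsBraidFamily (Fin.init s) where
  commute i j h := hs.commute i.castSucc j.castSucc h
  braid i j h := hs.braid i.castSucc j.castSucc h

lemma unit {s : Fin K → M} (hs : IsBraidFamily s) (hu : ∀ i, IsUnit (s i)) :
    IsBraidFamily fun i => (hu i).unit where
  commute i j h := Units.ext (hs.commute i j h)
  braid i j h := Units.ext (hs.braid i j h)

lemma commute_of_two_le_dist {s : Fin K → M} (hs : IsBraidFamily s) {i j : Fin K}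
    (h : (i : ℕ) + 2 ≤ j ∨ (j : ℕ) + 2 ≤ i) : Commute (s i) (s j) :=
  h.elim (hs.commute i j) fun h => (hs.commute j i h).symm

lemma braid_of_adjacent {s : Fin K → M} (hs : IsBraidFamily s) {i j : Fin K}
    (h : (j : ℕ) = i + 1 ∨ (i : ℕ) = j + 1) : s i * s j * s i = s j * s i * s j :=
  h.elim (hs.braid i j) fun h => (hs.braid j i h).symm

end IsBraidFamily

section CoxeterElement

variable {M : Type*} [Monoid M] {K : ℕ}

/-- The product `s 0 * s 1 * ⋯ * s (K - 1)`. For the generators of the braid group this is the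
`(K + 1)`-st root of the full twist. -/
def coxeterElement (s : Fin K → M) : M := (List.ofFn s).prod

lemma coxeterElement_eq_zero_mul (s : Fin (K + 1) → M) :
    coxeterElement s = s 0 * coxeterElement (Fin.tail s) := by
  simp [coxeterElement, Fin.tail_def]

lemma coxeterElement_eq_mul_last (s : Fin (K + 1) → M) :
    coxeterElement s = coxeterElement (Fin.init s) * s (Fin.last K) := by
  rw [coxeterElement, coxeterElement, List.ofFn_succ_last, List.prod_append, List.prod_singleton]
  rfl

lemma coxeterElement_mem {S : Submonoid M} {s : Fin K → M} (hs : ∀ i, s i ∈ S) :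
    coxeterElement s ∈ S :=
  S.list_prod_mem (by simpa using hs)

lemma semiconjBy_coxeterElement_right {d : M} {s s' : Fin K → M}
    (h : ∀ i, SemiconjBy d (s i) (s' i)) :
    SemiconjBy d (coxeterElement s) (coxeterElement s') := by
  induction K with
  | zero => simp [coxeterElement]
  | succ K ih =>
    rw [coxeterElement_eq_zero_mul s, coxeterElement_eq_zero_mul s']
    exact (h 0).mul_right (ih fun i => h i.succ)

namespace IsBraidFamily

lemma semiconjBy_coxeterElement {s : Fin (K + 1) → M} (hs : IsBraidFamily s) (i : Fin K) :
    SemiconjBy (coxeterElement s) (s i.castSucc) (s i.succ) := by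
  induction K with
  | zero => exact i.elim0
  | succ K ih =>
    rw [coxeterElement_eq_mul_last s]
    induction i using Fin.lastCases with
    | last =>
      set x := s (Fin.last K).castSucc
      set y := s (Fin.last (K + 1))
      set p := coxeterElement (Fin.init (Fin.init s))
      have hp : coxeterElement (Fin.init s) = p * x := coxeterElement_eq_mul_last _
      have hpy : Commute y p := semiconjBy_coxeterElement_right fun i =>
        (hs.commute i.castSucc.castSucc (Fin.last (K + 1)) (by simp)).symm
      have hxy : x * y * x = y * x * y := hs.braid _ _ (by simp)
      calc coxeterElement (Fin.init s) * y * x = p * (x * y * x) := by simp only [hp, mul_assoc]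
        _ = p * y * (x * y) := by simp only [hxy, mul_assoc]
        _ = y * (coxeterElement (Fin.init s) * y) := by rw [← hpy.eq, hp]; simp only [mul_assoc]
    | cast i =>
      have hlast : Commute (s (Fin.last (K + 1))) (s i.castSucc.castSucc) :=
        (hs.commute i.castSucc.castSucc (Fin.last (K + 1)) (by simp)).symm
      exact (ih hs.restrict_init i).mul_left hlast

lemma semiconjBy_coxeterElement_pow {s : Fin (K + 1) → M} (hs : IsBraidFamily s) (m : ℕ)
    (i j : Fin (K + 1)) (hij : (j : ℕ) = i + m) :
    SemiconjBy (coxeterElement s ^ m) (s i) (s j) := by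
  induction m generalizing j with
  | zero => obtain rfl : j = i := Fin.ext hij; simp
  | succ m ih =>
    obtain ⟨j, rfl⟩ : ∃ k : Fin K, k.succ = j := Fin.exists_succ_eq.2 (by rintro rfl; simp at hij)
    rw [pow_succ']
    exact (hs.semiconjBy_coxeterElement j).mul_left (ih j.castSucc (by simp at hij ⊢; omega))

/-- Write `δ = s₀ e = p s_K`. Conjugation by `δ` shifts `p` to `e`, so `δ² = e δ s_K`. -/
lemma semiconjBy_coxeterElement_sq_last_zero {s : Fin (K + 1) → M} (hs : IsBraidFamily s) :
    SemiconjBy (coxeterElement s ^ 2) (s (Fin.last K)) (s 0) := by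
  set δ := coxeterElement s
  have shift : SemiconjBy δ (coxeterElement (Fin.init s)) (coxeterElement (Fin.tail s)) :=
    semiconjBy_coxeterElement_right hs.semiconjBy_coxeterElement
  have sq : δ ^ 2 = coxeterElement (Fin.tail s) * δ * s (Fin.last K) := by
    rw [← shift.eq, mul_assoc, ← coxeterElement_eq_mul_last, pow_two]
  calc δ ^ 2 * s (Fin.last K) = δ * δ * s (Fin.last K) := by rw [pow_two]
    _ = s 0 * (coxeterElement (Fin.tail s) * δ * s (Fin.last K)) := by
        rw [show δ * δ = s 0 * coxeterElement (Fin.tail s) * δ from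
          congrArg (· * δ) (coxeterElement_eq_zero_mul s)]
        simp only [mul_assoc]
    _ = s 0 * δ ^ 2 := by rw [sq]

/-- Conjugation by `δ` moves `s i` up to `s K` in `K - i` steps, two further steps bring it to
`s 0`, and `i` more steps return it to `s i`. -/
lemma commute_coxeterElement_pow {s : Fin (K + 1) → M} (hs : IsBraidFamily s) (i : Fin (K + 1)) :
    Commute (coxeterElement s ^ (K + 2)) (s i) := by
  have up := hs.semiconjBy_coxeterElement_pow (K - i) i (Fin.last K) (by simp; omega)
  have back := hs.semiconjBy_coxeterElement_pow i 0 i (by simp)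
  rw [show K + 2 = i + (2 + (K - i)) by omega, pow_add, pow_add]
  exact back.mul_left (hs.semiconjBy_coxeterElement_sq_last_zero.mul_left up)

lemma exists_mul_eq_coxeterElement_pow {s : Fin (K + 1) → M} (hs : IsBraidFamily s)
    (i : Fin (K + 1)) :
    ∃ y ∈ Submonoid.closure (Set.range s), s i * y = coxeterElement s ^ (K + 2) := by
  set S := Submonoid.closure (Set.range s)
  have mem (i) : s i ∈ S := Submonoid.subset_closure ⟨i, rfl⟩
  have shift := hs.semiconjBy_coxeterElement_pow i 0 i (by simp)
  refine ⟨coxeterElement s ^ (i : ℕ) * coxeterElement (Fin.tail s) *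
    coxeterElement s ^ (K + 1 - i), ?_, ?_⟩
  · have hδ := coxeterElement_mem mem
    exact S.mul_mem (S.mul_mem (S.pow_mem hδ _) (coxeterElement_mem fun i => mem i.succ))
      (S.pow_mem hδ _)
  · rw [← mul_assoc, ← mul_assoc, ← shift.eq, mul_assoc (_ ^ _), ← coxeterElement_eq_zero_mul,
      ← pow_succ, ← pow_add]
    congr 1
    omega

lemma exists_central_multiple {s : Fin K → M} (hs : IsBraidFamily s) :
    ∃ z ∈ Submonoid.closure (Set.range s), (∀ i, Commute z (s i)) ∧
      ∀ i, ∃ y ∈ Submonoid.closure (Set.range s), s i * y = z := by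
  cases K with
  | zero => exact ⟨1, one_mem _, fun i => i.elim0, fun i => i.elim0⟩
  | succ K =>
    have hδ : coxeterElement s ∈ Submonoid.closure (Set.range s) :=
      coxeterElement_mem fun i => Submonoid.subset_closure ⟨i, rfl⟩
    exact ⟨coxeterElement s ^ (K + 2), pow_mem hδ _, hs.commute_coxeterElement_pow,
      hs.exists_mul_eq_coxeterElement_pow⟩

end IsBraidFamily

end CoxeterElement

lemma exists_mul_mem_submonoidClosure {G : Type*} [Group G] {s : Set G}
    (hs : Subgroup.closure s = ⊤) {z : G} (hz : z ∈ Submonoid.closure s)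
    (hcomm : ∀ x ∈ s, Commute z x) (hdvd : ∀ x ∈ s, ∃ y ∈ Submonoid.closure s, x * y = z) (g : G) :
    ∃ r ∈ Submonoid.closure s, g * r ∈ Submonoid.closure s := by
  have hcentral : ∀ x, Commute z x := fun x => by
    have : Subgroup.closure s ≤ Subgroup.centralizer {z} :=
      (Subgroup.closure_le _).2 fun x hx =>
        Subgroup.mem_centralizer_singleton_iff.2 (hcomm x hx).symm
    exact (Subgroup.mem_centralizer_singleton_iff.1 (this (hs ▸ Subgroup.mem_top x))).symm
  suffices ∃ m : ℕ, g * z ^ m ∈ Submonoid.closure s from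
    this.imp' (z ^ ·) fun m hm => ⟨pow_mem hz m, hm⟩
  have hg : g ∈ Subgroup.closure s := hs ▸ Subgroup.mem_top g
  induction hg using Subgroup.closure_induction'' with
  | mem x hx => exact ⟨0, by simpa using Submonoid.subset_closure hx⟩
  | inv_mem x hx =>
    obtain ⟨y, hy, rfl⟩ := hdvd x hx
    exact ⟨1, by simpa using hy⟩
  | one => exact ⟨0, by simp⟩
  | mul x y _ _ ihx ihy =>
    obtain ⟨k, hk⟩ := ihx
    obtain ⟨m, hm⟩ := ihy
    refine ⟨k + m, ?_⟩
    have : x * y * z ^ (k + m) = x * z ^ k * (y * z ^ m) := by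
      rw [pow_add, mul_assoc x y, ← mul_assoc y, ← ((hcentral y).pow_left k).eq]
      simp only [mul_assoc]
    exact this ▸ mul_mem hk hm

/-- The defining relations of the monoid of positive braids on `n` strings. -/
inductive BraidMonoid.Rel (n : ℕ) : FreeMonoid (Fin (n - 1)) → FreeMonoid (Fin (n - 1)) → Prop
  | commute (i j : Fin (n - 1)) (h : (i : ℕ) + 2 ≤ j) : Rel n (.of i * .of j) (.of j * .of i)
  | braid (i j : Fin (n - 1)) (h : (j : ℕ) = i + 1) :
      Rel n (.of i * .of j * .of i) (.of j * .of i * .of j)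

/-- The monoid of positive braids on `n` strings, presented like `BraidGroup n` but as a monoid. -/
abbrev BraidMonoid (n : ℕ) : Type := PresentedMonoid (BraidMonoid.Rel n)

namespace BraidMonoid

variable {n : ℕ} {M : Type*} [Monoid M]

/-- The `k`-th generator of the braid monoid, counted from `0`. -/
def σ (k : Fin (n - 1)) : BraidMonoid n := PresentedMonoid.of _ k

lemma isBraidFamily_σ : IsBraidFamily (σ : Fin (n - 1) → BraidMonoid n) where
  commute i j h := PresentedMonoid.mk_eq_mk_of_rel (.commute i j h)
  braid i j h := PresentedMonoid.mk_eq_mk_of_rel (.braid i j h)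

/-- The homomorphism from the braid monoid determined by a family satisfying the braid relations. -/
def lift {s : Fin (n - 1) → M} (hs : IsBraidFamily s) : BraidMonoid n →* M :=
  PresentedMonoid.lift s (by
    rintro _ _ (⟨i, j, h⟩ | ⟨i, j, h⟩)
    · simpa using (hs.commute i j h).eq
    · simpa using hs.braid i j h)

@[simp] lemma lift_σ {s : Fin (n - 1) → M} (hs : IsBraidFamily s) (k : Fin (n - 1)) :
    lift hs (σ k) = s k := rfl

lemma closure_range_σ : Submonoid.closure (Set.range (σ : Fin (n - 1) → BraidMonoid n)) = ⊤ :=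
  PresentedMonoid.closure_range_of _

@[elab_as_elim]
lemma induction_mul_σ {motive : BraidMonoid n → Prop} (x : BraidMonoid n) (one : motive 1)
    (mul_σ : ∀ x k, motive x → motive (x * σ k)) : motive x :=
  Submonoid.induction_of_closure_eq_top_right closure_range_σ x one
    (by rintro x _ ⟨k, rfl⟩ hx; exact mul_σ x k hx)

lemma eq_one_or_exists_eq_mul_σ (x : BraidMonoid n) : x = 1 ∨ ∃ y k, x = y * σ k :=
  x.induction_mul_σ (.inl rfl) fun y k _ => .inr ⟨y, k, rfl⟩

/-- The number of generators in a word representing a positive braid; it is well defined because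
the braid relations preserve the length of words. -/
def length (x : BraidMonoid n) : ℕ :=
  (lift (s := fun _ => Multiplicative.ofAdd 1) ⟨fun _ _ _ => rfl, fun _ _ _ => rfl⟩ x).toAdd

lemma length_lt_length_mul_σ (x : BraidMonoid n) (k : Fin (n - 1)) :
    x.length < (x * σ k).length := by
  simp [length]

end BraidMonoid

namespace BraidGroup

variable {n : ℕ} {G : Type*} [Group G]

/-- The `k`-th generator of the braid group, counted from `0`. -/
def σ (k : Fin (n - 1)) : BraidGroup n := PresentedGroup.of (rels := braidRels n) k

lemma isBraidFamily_σ : IsBraidFamily (σ : Fin (n - 1) → BraidGroup n) where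
  commute i j h := by
    have rel := PresentedGroup.one_of_mem (rels := braidRels n) (.inl ⟨i, j, h, rfl⟩)
    simp only [map_mul, map_inv, mul_inv_eq_iff_eq_mul, one_mul] at rel
    exact rel
  braid i j h := by
    have rel := PresentedGroup.one_of_mem (rels := braidRels n) (.inr ⟨i, j, h, rfl⟩)
    simp only [map_mul, map_inv, mul_inv_eq_one] at rel
    exact rel

/-- The homomorphism from the braid group determined by a family satisfying the braid relations. -/
def lift {s : Fin (n - 1) → G} (hs : IsBraidFamily s) : BraidGroup n →* G :=
  PresentedGroup.toGroup (rels := braidRels n) (f := s) (by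
    rintro _ (⟨i, j, h, rfl⟩ | ⟨i, j, h, rfl⟩)
    · simpa [mul_inv_eq_one, mul_inv_eq_iff_eq_mul] using (hs.commute i j h).eq
    · simpa [mul_inv_eq_iff_eq_mul, ← mul_assoc] using hs.braid i j h)

@[simp] lemma lift_σ {s : Fin (n - 1) → G} (hs : IsBraidFamily s) (k : Fin (n - 1)) :
    lift hs (σ k) = s k :=
  PresentedGroup.toGroup.of _

lemma closure_range_σ : Subgroup.closure (Set.range (σ : Fin (n - 1) → BraidGroup n)) = ⊤ :=
  PresentedGroup.closure_range_of (braidRels n)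

end BraidGroup

namespace BraidMonoid

variable {n : ℕ}

/-- The canonical homomorphism from positive braids to braids. -/
def toBraidGroup : BraidMonoid n →* BraidGroup n := lift BraidGroup.isBraidFamily_σ

@[simp] lemma toBraidGroup_σ (k : Fin (n - 1)) : (σ k).toBraidGroup = BraidGroup.σ k := rfl

lemma mrange_toBraidGroup :
    MonoidHom.mrange (toBraidGroup (n := n)) = Submonoid.closure (Set.range BraidGroup.σ) := by
  rw [MonoidHom.mrange_eq_map, ← closure_range_σ, MonoidHom.map_mclosure, ← Set.range_comp]
  rfl

end BraidMonoid

namespace BraidGroup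

variable {n : ℕ} {G : Type*} [Group G]

lemma exists_mul_toBraidGroup_eq (g : BraidGroup n) :
    ∃ x y : BraidMonoid n, g * x.toBraidGroup = y.toBraidGroup := by
  obtain ⟨z, hz, hcomm, hdvd⟩ := (isBraidFamily_σ (n := n)).exists_central_multiple
  obtain ⟨r, hr, hgr⟩ := exists_mul_mem_submonoidClosure closure_range_σ hz
    (Set.forall_mem_range.2 hcomm) (Set.forall_mem_range.2 hdvd) g
  rw [← BraidMonoid.mrange_toBraidGroup] at hr hgr
  obtain ⟨x, rfl⟩ := hr
  obtain ⟨y, hy⟩ := hgr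
  exact ⟨x, y, hy.symm⟩

lemma injective_of_injective_comp_toBraidGroup {φ : BraidGroup n →* G}
    (h : Function.Injective (φ.comp BraidMonoid.toBraidGroup)) : Function.Injective φ := by
  rw [injective_iff_map_eq_one]
  intro g hg
  obtain ⟨x, y, hxy⟩ := exists_mul_toBraidGroup_eq g
  have : x = y := h (by simp [← hxy, hg])
  rwa [this, mul_eq_right] at hxy

end BraidGroup

section KrammerMap

variable {n : ℕ} {R S : Type*} [CommRing R] [CommRing S]

/-- The action of the braid generator exchanging the consecutive strands `a` and `b = a + 1` on
matrices, given by Krammer's formulas. The entry `f i j` with `i < j` stands for the value of a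
linear form at Krammer's basis vector `x_{ij}`, so this is the transpose of the action on the basis;
entries on and below the diagonal carry no information and are left alone. -/
def krammerEntry (t q : R) (a b : Fin n) (f : Matrix (Fin n) (Fin n) R) (i j : Fin n) : R :=
  if j ≤ i then f i j
  else if i = a ∧ j = b then t * q ^ 2 * f a b
  else if j = a then (1 - q) * f i a + q * f i b
  else if j = b then f i a + t * q ^ ((a : ℕ) - i + 1) * (q - 1) * f a b
  else if i = a then t * q * (q - 1) * f a b + q * f b j
  else if i = b then f a j + (1 - q) * f b j
  else if i < a ∧ b < j then f i j + t * q ^ ((a : ℕ) - i) * (q - 1) ^ 2 * f a b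
  else f i j

variable (t q : R) {a b : Fin n} (f : Matrix (Fin n) (Fin n) R) {i j : Fin n}

lemma krammerEntry_of_le (h : j ≤ i) : krammerEntry t q a b f i j = f i j :=
  if_pos h

lemma krammerEntry_self (hb : (b : ℕ) = a + 1) :
    krammerEntry t q a b f a b = t * q ^ 2 * f a b := by
  grind [krammerEntry]

lemma krammerEntry_col_left (hb : (b : ℕ) = a + 1) (hi : i < a) :
    krammerEntry t q a b f i a = (1 - q) * f i a + q * f i b := by
  grind [krammerEntry]

lemma krammerEntry_col_right (hb : (b : ℕ) = a + 1) (hi : i < a) :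
    krammerEntry t q a b f i b = f i a + t * q ^ ((a : ℕ) - i + 1) * (q - 1) * f a b := by
  grind [krammerEntry]

lemma krammerEntry_row_left (hb : (b : ℕ) = a + 1) (hj : b < j) :
    krammerEntry t q a b f a j = t * q * (q - 1) * f a b + q * f b j := by
  grind [krammerEntry]

lemma krammerEntry_row_right (hb : (b : ℕ) = a + 1) (hj : b < j) :
    krammerEntry t q a b f b j = f a j + (1 - q) * f b j := by
  grind [krammerEntry]

lemma krammerEntry_of_lt_of_lt (hb : (b : ℕ) = a + 1) (hi : i < a) (hj : b < j) :
    krammerEntry t q a b f i j = f i j + t * q ^ ((a : ℕ) - i) * (q - 1) ^ 2 * f a b := by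
  grind [krammerEntry]

lemma krammerEntry_of_lt (hb : (b : ℕ) = a + 1) (hj : j < a) :
    krammerEntry t q a b f i j = f i j := by
  grind [krammerEntry]

lemma krammerEntry_of_gt (hb : (b : ℕ) = a + 1) (hi : b < i) :
    krammerEntry t q a b f i j = f i j := by
  grind [krammerEntry]

/-- `krammerEntry` as a linear endomorphism. -/
def krammerMap (a b : Fin n) : Module.End R (Matrix (Fin n) (Fin n) R) where
  toFun f := .of (krammerEntry t q a b f)
  map_add' f g := by
    ext i j
    simp only [Matrix.of_apply, krammerEntry, Matrix.add_apply]
    split_ifs <;> ring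
  map_smul' c f := by
    ext i j
    simp only [Matrix.of_apply, krammerEntry, Matrix.smul_apply, smul_eq_mul, RingHom.id_apply]
    split_ifs <;> ring

lemma krammerMap_apply : krammerMap t q a b f i j = krammerEntry t q a b f i j := rfl

lemma krammerMap_braid {c : Fin n} (hb : (b : ℕ) = a + 1) (hc : (c : ℕ) = b + 1) :
    krammerMap t q a b * krammerMap t q b c * krammerMap t q a b =
      krammerMap t q b c * krammerMap t q a b * krammerMap t q b c := by
  have hpow (i : Fin n) (hi : i < a) : q ^ ((b : ℕ) - i) = q ^ ((a : ℕ) - i) * q := by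
    rw [← pow_succ]
    congr 1
    omega
  have hpow' : q ^ ((b : ℕ) - a) = q := by simp [hb]
  ext f i j
  rcases le_or_gt j i with hij | hij
  · simp only [Module.End.mul_apply, krammerMap_apply, krammerEntry_of_le, hij]
  have hi : i < a ∨ i = a ∨ i = b ∨ i = c ∨ c < i := by omega
  have hj : j < a ∨ j = a ∨ j = b ∨ j = c ∨ c < j := by omega
  rcases hi with hi | rfl | rfl | rfl | hi <;> rcases hj with hj | rfl | rfl | rfl | hj <;>
    first
    | omega
    | simp (disch := omega) only [Module.End.mul_apply, krammerMap_apply, krammerEntry_self,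
        krammerEntry_col_left, krammerEntry_col_right, krammerEntry_row_left,
        krammerEntry_row_right, krammerEntry_of_lt_of_lt, krammerEntry_of_lt, krammerEntry_of_gt]
      try simp (disch := omega) only [pow_succ, hpow, hpow']
      try ring

lemma krammerMap_commute {c d : Fin n} (hb : (b : ℕ) = a + 1) (hbc : b < c)
    (hd : (d : ℕ) = c + 1) : Commute (krammerMap t q a b) (krammerMap t q c d) := by
  have hpow : q ^ ((c : ℕ) - a) = q ^ ((c : ℕ) - b) * q := by
    rw [← pow_succ]
    congr 1
    omega
  ext f i j
  rcases le_or_gt j i with hij | hij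
  · simp only [Module.End.mul_apply, krammerMap_apply, krammerEntry_of_le, hij]
  have hi : i < a ∨ i = a ∨ i = b ∨ b < i ∧ i < c ∨ i = c ∨ i = d ∨ d < i := by omega
  have hj : j < a ∨ j = a ∨ j = b ∨ b < j ∧ j < c ∨ j = c ∨ j = d ∨ d < j := by omega
  rcases hi with hi | rfl | rfl | hi | rfl | rfl | hi <;>
    rcases hj with hj | rfl | rfl | hj | rfl | rfl | hj <;>
    first
    | omega
    | simp (disch := omega) only [Module.End.mul_apply, krammerMap_apply, krammerEntry_self,
        krammerEntry_col_left, krammerEntry_col_right, krammerEntry_row_left,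
        krammerEntry_row_right, krammerEntry_of_lt_of_lt, krammerEntry_of_lt, krammerEntry_of_gt]
      try simp (disch := omega) only [pow_succ, hpow]
      try ring

variable {t q f} in
lemma eq_zero_of_krammerMap_apply_eq_zero [IsDomain R] (ht : t ≠ 0) (hq : q ≠ 0)
    (hb : (b : ℕ) = a + 1) (h : krammerMap t q a b f = 0) : f = 0 := by
  have hK (i j) : krammerEntry t q a b f i j = 0 := congrFun₂ h i j
  have self : f a b = 0 := by
    have := hK a b
    rw [krammerEntry_self _ _ _ hb] at this
    simpa [ht, hq] using this
  have col_left (i) (hi : i < a) : f i a = 0 := by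
    simpa [krammerEntry_col_right _ _ _ hb hi, self] using hK i b
  have col_right (i) (hi : i < a) : f i b = 0 := by
    simpa [krammerEntry_col_left _ _ _ hb hi, col_left i hi, hq] using hK i a
  have row_right (j) (hj : b < j) : f b j = 0 := by
    simpa [krammerEntry_row_left _ _ _ hb hj, self, hq] using hK a j
  have row_left (j) (hj : b < j) : f a j = 0 := by
    simpa [krammerEntry_row_right _ _ _ hb hj, row_right j hj] using hK b j
  ext i j
  have := hK i j
  rw [Matrix.zero_apply]
  grind [krammerEntry]

lemma krammerMap_map (φ : R →+* S) :
    (krammerMap t q a b f).map φ = krammerMap (φ t) (φ q) a b (f.map φ) := by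
  ext i j
  simp only [Matrix.map_apply, krammerMap_apply, krammerEntry]
  split_ifs <;> simp

end KrammerMap

section KrammerRep

variable {n : ℕ}

/-- The first of the two strands exchanged by the `k`-th braid generator. -/
def leftStrand (k : Fin (n - 1)) : Fin n := ⟨k, by omega⟩

/-- The second of the two strands exchanged by the `k`-th braid generator. -/
def rightStrand (k : Fin (n - 1)) : Fin n := ⟨k + 1, by omega⟩

lemma leftStrand_eq_rightStrand {i j : Fin (n - 1)} (h : (j : ℕ) = i + 1) :
    leftStrand j = rightStrand i :=
  Fin.ext h

/-- The action of the `k`-th braid generator in Krammer's representation. -/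
def krammerGen {R : Type*} [CommRing R] (t q : R) (k : Fin (n - 1)) :
    Module.End R (Matrix (Fin n) (Fin n) R) :=
  krammerMap t q (leftStrand k) (rightStrand k)

lemma isBraidFamily_krammerGen {R : Type*} [CommRing R] (t q : R) :
    IsBraidFamily (krammerGen (n := n) t q) where
  commute _ _ h := krammerMap_commute t q rfl h rfl
  braid i j h := by
    rw [krammerGen, krammerGen, leftStrand_eq_rightStrand h]
    exact krammerMap_braid t q rfl (congrArg (· + 1) h)

/-- Krammer's representation of positive braids with parameters `t` and `q`. Unlike for braids,
the parameters need not be invertible. -/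
def krammerMonoidRep {R : Type*} [CommRing R] (t q : R) :
    BraidMonoid n →* Module.End R (Matrix (Fin n) (Fin n) R) :=
  BraidMonoid.lift (isBraidFamily_krammerGen t q)

@[simp] lemma krammerMonoidRep_σ {R : Type*} [CommRing R] (t q : R) (k : Fin (n - 1)) :
    krammerMonoidRep t q (BraidMonoid.σ k) = krammerGen t q k := rfl

lemma krammerMonoidRep_map {R S : Type*} [CommRing R] [CommRing S] (φ : R →+* S) (t q : R)
    (x : BraidMonoid n) (f : Matrix (Fin n) (Fin n) R) :
    (krammerMonoidRep t q x f).map φ = krammerMonoidRep (φ t) (φ q) x (f.map φ) := by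
  induction x using BraidMonoid.induction_mul_σ generalizing f with
  | one => simp
  | mul_σ x k ih =>
    simp only [map_mul, Module.End.mul_apply, ih, krammerMonoidRep_σ, krammerGen, krammerMap_map]

section Field

variable {F : Type*} [Field F] {t q : F}

lemma isUnit_krammerGen (ht : t ≠ 0) (hq : q ≠ 0) (k : Fin (n - 1)) :
    IsUnit (krammerGen t q k) :=
  (LinearMap.isUnit_iff_ker_eq_bot _).2 <| LinearMap.ker_eq_bot'.2 fun _ =>
    eq_zero_of_krammerMap_apply_eq_zero ht hq rfl

/-- Krammer's representation of the braid group. -/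
noncomputable def krammerRep (ht : t ≠ 0) (hq : q ≠ 0) :
    BraidGroup n →* LinearMap.GeneralLinearGroup F (Matrix (Fin n) (Fin n) F) :=
  BraidGroup.lift ((isBraidFamily_krammerGen t q).unit (isUnit_krammerGen ht hq))

@[simp] lemma coe_krammerRep_σ (ht : t ≠ 0) (hq : q ≠ 0) (k : Fin (n - 1)) :
    (krammerRep ht hq (BraidGroup.σ k) : Module.End F (Matrix (Fin n) (Fin n) F)) =
      krammerGen t q k := by
  simp [krammerRep]

lemma coe_krammerRep_toBraidGroup (ht : t ≠ 0) (hq : q ≠ 0) (x : BraidMonoid n) :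
    (krammerRep ht hq x.toBraidGroup : Module.End F (Matrix (Fin n) (Fin n) F)) =
      krammerMonoidRep t q x := by
  induction x using BraidMonoid.induction_mul_σ with
  | one => simp
  | mul_σ x k ih =>
    simp [ih]

end Field

end KrammerRep

lemma eq_zero_of_smul_add_smul_eq_zero {m n K : Type*} [CommRing K] [LinearOrder K]
    [IsStrictOrderedRing K] {u v : Matrix m n K} {x y : K} (hx : 0 < x) (hy : 0 < y)
    (hu : ∀ i j, 0 ≤ u i j) (hv : ∀ i j, 0 ≤ v i j) (h : x • u + y • v = 0) : u = 0 ∧ v = 0 := by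
  have entry (i j) : u i j = 0 ∧ v i j = 0 := by
    have : x * u i j + y * v i j = 0 := congrFun₂ h i j
    simpa [hx.ne', hy.ne'] using (add_eq_zero_iff_of_nonneg
      (mul_nonneg hx.le (hu i j)) (mul_nonneg hy.le (hv i j))).1 this
  exact ⟨Matrix.ext fun i j => (entry i j).1, Matrix.ext fun i j => (entry i j).2⟩

section SimpleVector

variable {n : ℕ} {R : Type*} [CommRing R]

lemma krammerMap_zero_single_self (q : R) {a b : Fin n} (hb : (b : ℕ) = a + 1) :
    krammerMap 0 q a b (Matrix.single a b 1) = 0 := by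
  ext i j
  simp only [krammerMap_apply, krammerEntry, Matrix.single_apply, Matrix.zero_apply]
  grind

lemma krammerMap_zero_single_of_disjoint (q : R) {a b c d : Fin n} (hb : (b : ℕ) = a + 1)
    (hd : (d : ℕ) = c + 1) (h : b < c ∨ d < a) :
    krammerMap 0 q a b (Matrix.single c d 1) = Matrix.single c d 1 := by
  ext i j
  simp only [krammerMap_apply, krammerEntry, Matrix.single_apply]
  grind

variable (q : R) {a b c : Fin n}

lemma krammerMap_zero_single_left (hb : (b : ℕ) = a + 1) (hc : (c : ℕ) = b + 1) :
    krammerMap 0 q b c (Matrix.single a b 1) =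
      (1 - q) • Matrix.single a b 1 + Matrix.single a c 1 := by
  ext i j
  simp only [krammerMap_apply, krammerEntry, Matrix.single_apply, Matrix.add_apply,
    Matrix.smul_apply, smul_eq_mul]
  grind

lemma krammerMap_zero_single_right (hb : (b : ℕ) = a + 1) (hc : (c : ℕ) = b + 1) :
    krammerMap 0 q a b (Matrix.single b c 1) =
      (1 - q) • Matrix.single b c 1 + q • Matrix.single a c 1 := by
  ext i j
  simp only [krammerMap_apply, krammerEntry, Matrix.single_apply, Matrix.add_apply,
    Matrix.smul_apply, smul_eq_mul]
  grind

lemma krammerMap_zero_single_outer_left (hb : (b : ℕ) = a + 1) (hc : (c : ℕ) = b + 1) :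
    krammerMap 0 q a b (Matrix.single a c 1) = Matrix.single b c 1 := by
  ext i j
  simp only [krammerMap_apply, krammerEntry, Matrix.single_apply]
  grind

lemma krammerMap_zero_single_outer_right (hb : (b : ℕ) = a + 1) (hc : (c : ℕ) = b + 1) :
    krammerMap 0 q b c (Matrix.single a c 1) = q • Matrix.single a b 1 := by
  ext i j
  simp only [krammerMap_apply, krammerEntry, Matrix.single_apply, Matrix.smul_apply, smul_eq_mul]
  grind

end SimpleVector

section Cone

variable {n : ℕ} {K : Type*} [CommRing K]

/-- The matrix unit at the pair of strands exchanged by the `k`-th generator. At `t = 0` it is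
killed by the `k`-th generator of Krammer's representation. -/
def simpleVector (K : Type*) [CommRing K] (k : Fin (n - 1)) : Matrix (Fin n) (Fin n) K :=
  Matrix.single (leftStrand k) (rightStrand k) 1

lemma krammerGen_zero_simpleVector_self (q : K) (k : Fin (n - 1)) :
    krammerGen 0 q k (simpleVector K k) = 0 :=
  krammerMap_zero_single_self q rfl

lemma krammerGen_zero_simpleVector_of_two_le_dist (q : K) {i j : Fin (n - 1)}
    (h : (i : ℕ) + 2 ≤ j ∨ (j : ℕ) + 2 ≤ i) :
    krammerGen 0 q j (simpleVector K i) = simpleVector K i :=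
  krammerMap_zero_single_of_disjoint q rfl rfl h.symm

lemma simpleVector_ne_zero [Nontrivial K] (k : Fin (n - 1)) : simpleVector K k ≠ 0 :=
  fun h => one_ne_zero <| (Matrix.single_apply_same _ _ (1 : K)).symm.trans (congrFun₂ h _ _)

variable [LinearOrder K] [IsStrictOrderedRing K] {q : K}

lemma simpleVector_nonneg (k : Fin (n - 1)) (a b : Fin n) : 0 ≤ simpleVector K k a b := by
  simp only [simpleVector, Matrix.single_apply]
  positivity

lemma krammerMap_zero_nonneg (hq₀ : 0 ≤ q) (hq₁ : q ≤ 1) (a b : Fin n)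
    {f : Matrix (Fin n) (Fin n) K} (hf : ∀ i j, 0 ≤ f i j) (i j : Fin n) :
    0 ≤ krammerMap 0 q a b f i j := by
  have : 0 ≤ 1 - q := sub_nonneg.2 hq₁
  simp only [krammerMap_apply, krammerEntry, zero_mul, add_zero, zero_add]
  have := hf i j
  have := hf i a
  have := hf i b
  have := hf a j
  have := hf b j
  split_ifs <;> positivity

lemma krammerMonoidRep_zero_nonneg (hq₀ : 0 ≤ q) (hq₁ : q ≤ 1) (x : BraidMonoid n)
    {f : Matrix (Fin n) (Fin n) K} (hf : ∀ i j, 0 ≤ f i j) (i j : Fin n) :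
    0 ≤ krammerMonoidRep 0 q x f i j := by
  induction x using BraidMonoid.induction_mul_σ generalizing f with
  | one => exact hf i j
  | mul_σ x k ih =>
    rw [map_mul]
    exact ih (krammerMap_zero_nonneg hq₀ hq₁ _ _ hf)

lemma exists_krammerGen_zero_simpleVector_of_adjacent (hq₀ : 0 < q) (hq₁ : q < 1)
    {i j : Fin (n - 1)} (h : (j : ℕ) = i + 1 ∨ (i : ℕ) = j + 1) :
    ∃ g : Matrix (Fin n) (Fin n) K, (∀ a b, 0 ≤ g a b) ∧
      (∃ x y : K, 0 < x ∧ 0 < y ∧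
        krammerGen 0 q j (simpleVector K i) = x • simpleVector K i + y • g) ∧
      ∃ z : K, 0 < z ∧ krammerGen 0 q i g = z • simpleVector K j := by
  have single_nonneg (a b c d : Fin n) : 0 ≤ Matrix.single a b (1 : K) c d := by
    rw [Matrix.single_apply]
    positivity
  have hq₁ : 0 < 1 - q := sub_pos.2 hq₁
  simp only [krammerGen, simpleVector]
  rcases h with h | h <;> rw [leftStrand_eq_rightStrand h]
  · exact ⟨.single (leftStrand i) (rightStrand j) 1, single_nonneg _ _,
      ⟨1 - q, 1, hq₁, one_pos, by
        rw [one_smul, krammerMap_zero_single_left q rfl (congrArg (· + 1) h)]⟩,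
      1, one_pos, by rw [one_smul, krammerMap_zero_single_outer_left q rfl (congrArg (· + 1) h)]⟩
  · exact ⟨.single (leftStrand j) (rightStrand i) 1, single_nonneg _ _,
      ⟨1 - q, q, hq₁, hq₀, krammerMap_zero_single_right q rfl (congrArg (· + 1) h)⟩,
      q, hq₀, krammerMap_zero_single_outer_right q rfl (congrArg (· + 1) h)⟩

/-- Write `x = y σ_j`. If `σ_j` does not fix `e_i`, it maps `e_i` to a positive combination of `e_i`
and some `g` in the cone, and by positivity `y` kills both of them. -/
lemma exists_eq_mul_σ_of_krammerMonoidRep_zero_eq_zero (hq₀ : 0 < q) (hq₁ : q < 1)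
    (x : BraidMonoid n) (i : Fin (n - 1))
    (hx : krammerMonoidRep 0 q x (simpleVector K i) = 0) : ∃ y, x = y * BraidMonoid.σ i := by
  induction hL : x.length using Nat.strong_induction_on generalizing x i with
  | h L ih =>
  rcases x.eq_one_or_exists_eq_mul_σ with rfl | ⟨y, j, rfl⟩
  · exact absurd hx (by simpa using simpleVector_ne_zero i)
  have hy := hL ▸ y.length_lt_length_mul_σ j
  rw [map_mul, Module.End.mul_apply, krammerMonoidRep_σ] at hx
  rcases eq_or_ne i j with rfl | hij
  · exact ⟨y, rfl⟩
  by_cases hadj : (j : ℕ) = i + 1 ∨ (i : ℕ) = j + 1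
  · obtain ⟨g, hg, ⟨a, b, ha, hb, hab⟩, c, hc, hgc⟩ :=
      exists_krammerGen_zero_simpleVector_of_adjacent hq₀ hq₁ hadj
    rw [hab, map_add, map_smul, map_smul] at hx
    obtain ⟨hyi, hyg⟩ := eq_zero_of_smul_add_smul_eq_zero ha hb
      (krammerMonoidRep_zero_nonneg hq₀.le hq₁.le y (simpleVector_nonneg i))
      (krammerMonoidRep_zero_nonneg hq₀.le hq₁.le y hg) hx
    obtain ⟨y', rfl⟩ := ih _ hy y i hyi rfl
    rw [map_mul, Module.End.mul_apply, krammerMonoidRep_σ, hgc, map_smul, smul_eq_zero] at hyg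
    obtain ⟨y'', rfl⟩ :=
      ih _ ((y'.length_lt_length_mul_σ i).trans hy) y' j (hyg.resolve_left hc.ne') rfl
    refine ⟨y'' * BraidMonoid.σ i * BraidMonoid.σ j, ?_⟩
    simpa only [mul_assoc] using
      congrArg (y'' * ·) (BraidMonoid.isBraidFamily_σ.braid_of_adjacent hadj.symm)
  · have hdist : (i : ℕ) + 2 ≤ j ∨ (j : ℕ) + 2 ≤ i := by
      have := Fin.val_ne_of_ne hij
      omega
    rw [krammerGen_zero_simpleVector_of_two_le_dist q hdist] at hx
    obtain ⟨y', rfl⟩ := ih _ hy y i hx rfl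
    exact ⟨y' * BraidMonoid.σ j, by
      simp only [mul_assoc, (BraidMonoid.isBraidFamily_σ.commute_of_two_le_dist hdist).eq]⟩

end Cone

section Faithfulness

variable {n : ℕ} {K F : Type*}

lemma ne_zero_of_transcendental [CommRing K] [Nontrivial K] [Ring F] [Algebra K F] {t : F}
    (ht : Transcendental K t) : t ≠ 0 := by
  rintro rfl
  exact ht isAlgebraic_zero

lemma algebraMap_injective_of_transcendental [CommRing K] [Ring F] [Algebra K F] {t : F}
    (ht : Transcendental K t) : Function.Injective (algebraMap K F) := by
  simpa [Function.comp_def] using (transcendental_iff_injective.1 ht).comp Polynomial.C_injective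

/-- Over `K[X]` with `t = X`, the action has polynomial entries, and `X` can be mapped both to `t`
(injectively) and to `0`. -/
lemma krammerMonoidRep_zero_eq_of_transcendental [CommRing K] [CommRing F] [Algebra K F] {t : F}
    (ht : Transcendental K t) (q : K) {x y : BraidMonoid n}
    (h : krammerMonoidRep t (algebraMap K F q) x = krammerMonoidRep t (algebraMap K F q) y) :
    krammerMonoidRep 0 q x = krammerMonoidRep 0 q y := by
  ext1 f
  have generic : krammerMonoidRep Polynomial.X (.C q) x (f.map Polynomial.C) =
      krammerMonoidRep Polynomial.X (.C q) y (f.map Polynomial.C) := by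
    apply Matrix.map_injective (transcendental_iff_injective.1 ht)
    have at_t (z : BraidMonoid n) := krammerMonoidRep_map (Polynomial.aeval t).toRingHom
      Polynomial.X (Polynomial.C q) z (f.map Polynomial.C)
    simp only [AlgHom.toRingHom_eq_coe, RingHom.coe_coe, Polynomial.aeval_X,
      Polynomial.aeval_C] at at_t
    exact (at_t x).trans (h ▸ (at_t y).symm)
  have at_zero (z : BraidMonoid n) := krammerMonoidRep_map (Polynomial.evalRingHom (0 : K))
    Polynomial.X (Polynomial.C q) z (f.map Polynomial.C)
  simp only [Polynomial.coe_evalRingHom, Polynomial.eval_X, Polynomial.eval_C, Matrix.map_map,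
    Function.comp_def, Matrix.map_id'] at at_zero
  rw [← at_zero, ← at_zero, generic]

variable [CommRing K] [LinearOrder K] [IsStrictOrderedRing K] [Field F] [Algebra K F] {t : F}
  {q : K}

lemma krammerMonoidRep_injective (ht : Transcendental K t) (hq₀ : 0 < q) (hq₁ : q < 1) :
    Function.Injective (krammerMonoidRep (n := n) t (algebraMap K F q)) := by
  intro x y h
  induction x using BraidMonoid.induction_mul_σ generalizing y with
  | one =>
    rcases y.eq_one_or_exists_eq_mul_σ with rfl | ⟨y, j, rfl⟩
    · rfl
    have at_zero := krammerMonoidRep_zero_eq_of_transcendental ht q h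
    have : simpleVector K j = 0 := by
      simpa [krammerGen_zero_simpleVector_self] using DFunLike.congr_fun at_zero (simpleVector K j)
    exact absurd this (simpleVector_ne_zero j)
  | mul_σ x j ih =>
    have at_zero := krammerMonoidRep_zero_eq_of_transcendental ht q h
    obtain ⟨y, rfl⟩ := exists_eq_mul_σ_of_krammerMonoidRep_zero_eq_zero hq₀ hq₁ y j (by
      simp [← at_zero, krammerGen_zero_simpleVector_self])
    have unit : IsUnit (krammerGen t (algebraMap K F q) j) :=
      isUnit_krammerGen (ne_zero_of_transcendental ht)
        ((map_ne_zero_iff _ (algebraMap_injective_of_transcendental ht)).2 hq₀.ne') j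
    rw [map_mul, map_mul, krammerMonoidRep_σ] at h
    rw [ih (unit.mul_right_cancel h)]

lemma krammerRep_injective (ht : Transcendental K t) (hq₀ : 0 < q) (hq₁ : q < 1) :
    Function.Injective (krammerRep (n := n) (ne_zero_of_transcendental ht)
      ((map_ne_zero_iff _ (algebraMap_injective_of_transcendental ht)).2 hq₀.ne')) := by
  refine BraidGroup.injective_of_injective_comp_toBraidGroup fun x y h => ?_
  refine krammerMonoidRep_injective ht hq₀ hq₁ ?_
  simpa only [MonoidHom.comp_apply, coe_krammerRep_toBraidGroup] using congrArg Units.val h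

end Faithfulness

/-- **Bigelow.** The braid groups are linear: for every `n ≥ 2` there is a field `F`,
a positive integer `m` and an injective homomorphism `B_n → GL(m, F)`. -/
theorem stmt_4 (n : ℕ) (hn : 2 ≤ n) :
    ∃ (F : Type) (_ : Field F) (m : ℕ), 0 < m ∧
      ∃ φ : BraidGroup n →* Matrix.GeneralLinearGroup (Fin m) F,
        Function.Injective φ := by
  have : Nonempty (Fin n) := ⟨⟨0, by omega⟩⟩
  let V := Matrix (Fin n) (Fin n) (RatFunc ℚ)
  have hX : Transcendental ℚ (RatFunc.X : RatFunc ℚ) := by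
    convert RatFunc.transcendental_X
    -- the two `ℚ`-algebra structures on `RatFunc ℚ`
    exact Subsingleton.elim _ _
  let toMatrix := (Matrix.GeneralLinearGroup.toLin' (Module.finBasis (RatFunc ℚ) V)).symm
  exact ⟨RatFunc ℚ, inferInstance, Module.finrank (RatFunc ℚ) V, Module.finrank_pos,
    toMatrix.toMonoidHom.comp (krammerRep _ _),
    toMatrix.injective.comp (krammerRep_injective hX (q := 1 / 2) (by norm_num) (by norm_num))⟩
end

section
/- Let G be a group and H a subgroup of G of finite index. If H is linear, i.e. there exist a field F, a positive integer k, and an injective group homomorphism H → GL(k,F), then G is linear over the same field: there exist a positive integer m and an injective group homomorphism G → GL(m,F). -/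
/-!
Choose a representative `p.out` of every left coset `p` of `H`. If a multiplicative map `ρ` on `H`
is continued to `G` by `0`, then `g ↦ (ρ (p.out⁻¹ * g * q.out))` is the classical matrix form of the
induced representation: every column has at most one nonzero entry, so matrix multiplication
composes the action on cosets and multiplies the values of `ρ`. An element in the kernel has
diagonal entry `1` at any coset `p`, so its conjugate by `p.out⁻¹` lies in `H` and in the kernel
of `ρ`. Taking the values of `ρ` to be `k × k` matrices and erasing the blocks gives matrices of
size `H.index * k`.
-/

open Function

section InducedRepresentation

variable {G : Type*} [Group G] {H : Subgroup G}

section ExtendByZero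

variable {A : Type*} [MonoidWithZero A] (ρ : H →* A)

/-- The extension by zero to `G` of a multiplicative map on the subgroup `H`, as in Frobenius'
formula for induced representations. -/
noncomputable def extendByZero : G → A :=
  extend Subtype.val ρ (0 : G → A)

lemma extendByZero_coe (h : H) : extendByZero ρ h = ρ h :=
  Subtype.val_injective.extend_apply ρ (0 : G → A) h

lemma extendByZero_of_notMem {g : G} (hg : g ∉ H) : extendByZero ρ g = 0 :=
  extend_apply' ρ (0 : G → A) g fun ⟨h, hh⟩ ↦ hg (hh ▸ h.2)

lemma extendByZero_one : extendByZero ρ 1 = 1 :=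
  (extendByZero_coe ρ 1).trans (map_one ρ)

lemma extendByZero_mul_of_mem_right (x : G) {y : G} (hy : y ∈ H) :
    extendByZero ρ (x * y) = extendByZero ρ x * extendByZero ρ y := by
  by_cases hx : x ∈ H
  · lift x to H using hx
    lift y to H using hy
    rw [← Subgroup.coe_mul]
    simp only [extendByZero_coe, map_mul]
  · have hxy : x * y ∉ H := fun h ↦ hx ((H.mul_mem_cancel_right hy).1 h)
    rw [extendByZero_of_notMem ρ hxy, extendByZero_of_notMem ρ hx, zero_mul]

variable {ρ}

lemma extendByZero_eq_one_iff [Nontrivial A] (hρ : Injective ρ) {g : G} :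
    extendByZero ρ g = 1 ↔ g = 1 := by
  refine ⟨fun h ↦ ?_, fun h ↦ h ▸ extendByZero_one ρ⟩
  by_cases hg : g ∈ H
  · lift g to H using hg
    rw [extendByZero_coe, ← map_one ρ] at h
    exact congrArg Subtype.val (hρ h)
  · exact absurd ((extendByZero_of_notMem ρ hg).symm.trans h) zero_ne_one

end ExtendByZero

lemma out_inv_mul_mem_iff {q : G ⧸ H} {g : G} : q.out⁻¹ * g ∈ H ↔ q = (g : G ⧸ H) := by
  rw [← QuotientGroup.eq, QuotientGroup.out_eq']

section InducedMatrix

variable [Fintype (G ⧸ H)] [DecidableEq (G ⧸ H)] {A : Type*} [Semiring A] (ρ : H →* A)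

/-- The representation of `G` induced by `ρ : H →* A`, written as matrices indexed by the left
cosets of `H` with respect to the representatives `Quotient.out`. When `A` is a matrix ring, these
are the block matrices of the induced linear representation. -/
noncomputable def inducedMatrixHom : G →* Matrix (G ⧸ H) (G ⧸ H) A where
  toFun g := .of fun p q ↦ extendByZero ρ (p.out⁻¹ * g * q.out)
  map_one' := by
    ext p q
    rw [Matrix.of_apply, mul_one]
    obtain rfl | hpq := eq_or_ne p q
    · rw [inv_mul_cancel, extendByZero_one, Matrix.one_apply_eq]
    · have hmem : p.out⁻¹ * q.out ∉ H := by rwa [out_inv_mul_mem_iff, QuotientGroup.out_eq']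
      rw [extendByZero_of_notMem ρ hmem, Matrix.one_apply_ne hpq]
  map_mul' g g' := by
    ext p r
    let q₀ : G ⧸ H := (g' * r.out : G)
    have hzero (q : G ⧸ H) (hq : q ≠ q₀) : extendByZero ρ (q.out⁻¹ * g' * r.out) = 0 :=
      extendByZero_of_notMem ρ (by rwa [mul_assoc, out_inv_mul_mem_iff])
    have hmem : q₀.out⁻¹ * g' * r.out ∈ H := by rw [mul_assoc, out_inv_mul_mem_iff]
    simp only [Matrix.mul_apply, Matrix.of_apply]
    rw [Fintype.sum_eq_single q₀ fun q hq ↦ by rw [hzero q hq, mul_zero],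
      ← extendByZero_mul_of_mem_right ρ _ hmem]
    group

lemma inducedMatrixHom_apply (g : G) (p q : G ⧸ H) :
    inducedMatrixHom ρ g p q = extendByZero ρ (p.out⁻¹ * g * q.out) := rfl

variable {ρ}

lemma inducedMatrixHom_injective [Nontrivial A] (hρ : Injective ρ) :
    Injective (inducedMatrixHom ρ) := by
  rw [injective_iff_map_eq_one]
  intro g hg
  let p : G ⧸ H := (1 : G)
  have hdiag : extendByZero ρ (p.out⁻¹ * g * p.out) = 1 := by
    rw [← inducedMatrixHom_apply, hg, Matrix.one_apply_eq]
  have hconj : p.out⁻¹ * g * (p.out⁻¹)⁻¹ = 1 := by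
    rwa [inv_inv, ← extendByZero_eq_one_iff hρ]
  exact conj_eq_one_iff.1 hconj

end InducedMatrix

end InducedRepresentation

theorem stmt_10_general {G : Type*} [Group G] {H : Subgroup G} (hindex : H.index ≠ 0)
    {R : Type*} [Semiring R] [Nontrivial R] {k : ℕ} (hk : 0 < k)
    (f : H →* Matrix.GeneralLinearGroup (Fin k) R) (hf : Injective f) :
    ∃ φ : G →* Matrix.GeneralLinearGroup (Fin (H.index * k)) R, Injective φ := by
  classical
  have : NeZero k := ⟨hk.ne'⟩
  have : Fintype (G ⧸ H) := H.fintypeOfIndexNeZero hindex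
  let ρ : H →* Matrix (Fin k) (Fin k) R := (Units.coeHom _).comp f
  have hρ : Injective ρ := Units.val_injective.comp hf
  let e : (G ⧸ H) × Fin k ≃ Fin (H.index * k) := Finite.equivFinOfCardEq <| by
    rw [Nat.card_prod, Nat.card_fin, Subgroup.index]
  let flatten : Matrix (G ⧸ H) (G ⧸ H) (Matrix (Fin k) (Fin k) R) ≃*
      Matrix (Fin (H.index * k)) (Fin (H.index * k)) R :=
    (Matrix.compRingEquiv (G ⧸ H) (Fin k) R).toMulEquiv.trans
      (Matrix.reindexAlgEquiv ℕ R e).toMulEquiv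
  let φ := flatten.toMonoidHom.comp (inducedMatrixHom ρ)
  have hφ : Injective φ := flatten.injective.comp (inducedMatrixHom_injective hρ)
  exact ⟨φ.toHomUnits, .of_comp (f := Units.val) hφ⟩

/-- If `H` is a finite index subgroup of `G` and `H` embeds into `GL(k, F)`, then `G`
embeds into `GL(m, F)` for some positive integer `m`, over the same field `F`. -/
theorem stmt_10 (G : Type*) [Group G] (H : Subgroup G) (hindex : H.index ≠ 0)
    (F : Type*) [Field F] (k : ℕ) (hk : 0 < k)
    (f : H →* Matrix.GeneralLinearGroup (Fin k) F) (hf : Function.Injective f) :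
    ∃ m : ℕ, 0 < m ∧
      ∃ φ : G →* Matrix.GeneralLinearGroup (Fin m) F, Function.Injective φ :=
  ⟨H.index * k, Nat.mul_pos (Nat.pos_of_ne_zero hindex) hk, stmt_10_general hindex hk f hf⟩
end
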